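/- Let k be an algebraically closed field of characteristic 2 and A ∈ k nonzero. Let f = A^{24} B^{48} a^{60} + A^{18} B^{36} a^{45} + A^{16} B^{32} a^{40} + A^{14} B^{28} a^{33} + A^{12} B^{24} a^{28} + A^{10} B^{20} a^{25} + A^{10} B^{20} a^{21} + A^8 B^{16} a^{20} + A^8 B^{16} a^{18} + A^8 B^{16} a^{16} + A^8 B^{16} a^{12} + A^6 B^{12} a^9 + A^4 B^8 a^8 + A^4 B^8 a^6 + A^4 B^8 a^4 + A^2 B^4 a^5 + A^2 B^4 a^3 + A^2 B^4 a + (A + B^2)^4, viewed as a polynomial in a over F_2[A,B]. Then the discriminant of f with respect to a equals A^{1416} B^{2832} (A + B^2)^{176}. In particular, for specific nonzero values A, B ∈ k with A ≠ B^2, the specialization of f in k[a] has 60 distinct roots. -/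

import Mathlib

/-!
All the nonconstant coefficients of `f` are powers of `t = A²B⁴`, and in characteristic 2
`f = s + r h²` with `s = (A + B²)⁴`, where `r = t⁴a¹⁶ + t²a⁴ + ta` is an additive polynomial with
`r' = t`. Squares have derivative zero, so `f' = t h²`. Since `f` is congruent to the constant `s`
modulo `h²`, the resultant of `f'` and `f` is a product of powers of `t`, `s` and the leading
coefficients of `h` and `f`; and `f` is coprime to `f'` as soon as `s` and `t` are units.
-/

open Polynomial

namespace Stmt18

/-- The Sylvester matrix of `f` and `g`, regarded as polynomials of degrees `m`
and `n` respectively. -/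
noncomputable def sylvester {R : Type*} [CommRing R] (m n : ℕ) (f g : R[X]) :
    Matrix (Fin (m + n)) (Fin (m + n)) R := fun i j =>
  if (i : ℕ) < n then
    (if (i : ℕ) ≤ (j : ℕ) then f.coeff ((j : ℕ) - (i : ℕ)) else 0)
  else
    (if (i : ℕ) - n ≤ (j : ℕ) then g.coeff ((j : ℕ) - ((i : ℕ) - n)) else 0)

/-- The resultant of `f` and `g` (of formal degrees `m`, `n`). -/
noncomputable def resultant {R : Type*} [CommRing R] (m n : ℕ) (f g : R[X]) : R :=
  (sylvester m n f g).det

/-- The polynomial `f ∈ R[a]`, for `A, B` in the coefficient ring `R`. -/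
noncomputable def fpoly {R : Type*} [CommRing R] (A B : R) : R[X] :=
  C (A ^ 24 * B ^ 48) * X ^ 60 + C (A ^ 18 * B ^ 36) * X ^ 45
    + C (A ^ 16 * B ^ 32) * X ^ 40 + C (A ^ 14 * B ^ 28) * X ^ 33
    + C (A ^ 12 * B ^ 24) * X ^ 28 + C (A ^ 10 * B ^ 20) * X ^ 25
    + C (A ^ 10 * B ^ 20) * X ^ 21 + C (A ^ 8 * B ^ 16) * X ^ 20
    + C (A ^ 8 * B ^ 16) * X ^ 18 + C (A ^ 8 * B ^ 16) * X ^ 16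
    + C (A ^ 8 * B ^ 16) * X ^ 12 + C (A ^ 6 * B ^ 12) * X ^ 9
    + C (A ^ 4 * B ^ 8) * X ^ 8 + C (A ^ 4 * B ^ 8) * X ^ 6
    + C (A ^ 4 * B ^ 8) * X ^ 4 + C (A ^ 2 * B ^ 4) * X ^ 5
    + C (A ^ 2 * B ^ 4) * X ^ 3 + C (A ^ 2 * B ^ 4) * X + C ((A + B ^ 2) ^ 4)

/-- The indeterminates `A`, `B` of `F₂[A,B]`. -/
noncomputable def iA : MvPolynomial (Fin 2) (ZMod 2) := MvPolynomial.X 0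
noncomputable def iB : MvPolynomial (Fin 2) (ZMod 2) := MvPolynomial.X 1

lemma resultant_eq_polynomial_resultant {R : Type*} [CommRing R] {m n : ℕ} {f g : R[X]}
    (hf : f.natDegree ≤ m) (hg : g.natDegree ≤ n) :
    resultant m n f g = Polynomial.resultant g f n m := by
  have coeff_eq_ite {p : R[X]} {d i j : ℕ} (hp : p.natDegree ≤ d) :
      (if j ≤ i then p.coeff (i - j) else 0) =
        if i ∈ Set.Icc j (j + d) then p.coeff (i - j) else 0 := by
    by_cases hi : i ≤ j + d
    · simp [hi]
    · simp [hi, coeff_eq_zero_of_natDegree_lt (show p.natDegree < i - j by omega)]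
  unfold resultant Polynomial.resultant
  rw [← Matrix.det_transpose, ← Matrix.det_submatrix_equiv_self (finCongr (Nat.add_comm n m))]
  congr 1
  ext i j
  induction j using Fin.addCases with
  | left j => simp [sylvester, Polynomial.sylvester, coeff_eq_ite hf, -Set.mem_Icc]
  | right j => simp [sylvester, Polynomial.sylvester, coeff_eq_ite hg, -Set.mem_Icc]

section CharP

variable {R : Type*} [CommRing R] (p : ℕ) [CharP R p]

lemma derivative_C_add_mul_pow_char (s : R) (r h : R[X]) :
    derivative (C s + r * h ^ p) = derivative r * h ^ p := by
  simp [derivative_pow]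

lemma separable_C_add_mul_pow_char {s : R} {r : R[X]} (hs : IsUnit s)
    (hr : IsUnit (derivative r)) (h : R[X]) : (C s + r * h ^ p).Separable := by
  rw [Separable, derivative_C_add_mul_pow_char, isCoprime_mul_unit_left_right hr,
    IsCoprime.add_mul_right_left_iff]
  exact isCoprime_one_left.of_isCoprime_of_dvd_left (hs.map C).dvd

lemma resultant_derivative_C_add_mul_pow_char {r h : R[X]} {t : R} {d n : ℕ} (s : R) (e : ℕ)
    (hr : derivative r = C t) (hd : h.natDegree ≤ d) (hn : r.natDegree + p * d ≤ n) :
    (derivative (C s + r * h ^ p)).resultant (C s + r * h ^ p) (p * d + e) n =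
      (-1) ^ (n * e) * (C s + r * h ^ p).coeff n ^ e *
        (t ^ n * ((h.coeff d ^ p) ^ n * s ^ (p * d))) := by
  have hpow : (h ^ p).natDegree ≤ p * d := natDegree_pow_le_of_le p hd
  rw [derivative_C_add_mul_pow_char, hr,
    resultant_add_left_deg _ _ _ _ _ ((natDegree_C_mul_le t _).trans hpow), resultant_C_mul_left,
    mul_comm r, resultant_add_mul_right _ _ _ _ _ hn hpow, resultant_C_right,
    coeff_pow_of_natDegree_le hd]

end CharP

/-- The additive polynomial `r` in the decomposition `f = s + r h²`, where `t = A²B⁴`. -/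
noncomputable def rpoly {R : Type*} [CommRing R] (t : R) : R[X] :=
  C (t ^ 4) * X ^ 16 + C (t ^ 2) * X ^ 4 + C t * X

/-- The polynomial `h` in the decomposition `f = s + r h²`, where `t = A²B⁴`; it is the square root
of `f' / t`. -/
noncomputable def hpoly {R : Type*} [CommRing R] (t : R) : R[X] :=
  C (t ^ 4) * X ^ 22 + C (t ^ 3) * X ^ 16 + C (t ^ 2) * X ^ 12 + C (t ^ 2) * X ^ 10
    + C t * X ^ 4 + X ^ 2 + X + 1

section CommRing

variable {R : Type*} [CommRing R]

lemma natDegree_rpoly_le (t : R) : (rpoly t).natDegree ≤ 16 := by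
  unfold rpoly; compute_degree

lemma natDegree_hpoly_le (t : R) : (hpoly t).natDegree ≤ 22 := by
  unfold hpoly; compute_degree

lemma coeff_hpoly (t : R) : (hpoly t).coeff 22 = t ^ 4 := by
  simp [hpoly, coeff_X, coeff_one, -map_pow]

lemma natDegree_fpoly_le (A B : R) : (fpoly A B).natDegree ≤ 60 := by
  unfold fpoly; compute_degree

lemma coeff_fpoly (A B : R) : (fpoly A B).coeff 60 = A ^ 24 * B ^ 48 := by
  simp [fpoly, -map_add, -map_pow, -map_mul]

lemma natDegree_fpoly [NoZeroDivisors R] {A B : R} (hA : A ≠ 0) (hB : B ≠ 0) :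
    (fpoly A B).natDegree = 60 := by
  refine natDegree_eq_of_le_of_coeff_ne_zero (natDegree_fpoly_le A B) ?_
  rw [coeff_fpoly]
  exact mul_ne_zero (pow_ne_zero _ hA) (pow_ne_zero _ hB)

lemma leadingCoeff_fpoly [NoZeroDivisors R] {A B : R} (hA : A ≠ 0) (hB : B ≠ 0) :
    (fpoly A B).leadingCoeff = A ^ 24 * B ^ 48 := by
  rw [leadingCoeff, natDegree_fpoly hA hB, coeff_fpoly]

end CommRing

section CharTwo

variable {R : Type*} [CommRing R] [CharP R 2]

lemma derivative_rpoly (t : R) : derivative (rpoly t) = C t := by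
  have h4 : ((4 : ℕ) : R) = 0 := (CharP.cast_eq_zero_iff R 2 4).2 (by decide)
  have h16 : ((16 : ℕ) : R) = 0 := (CharP.cast_eq_zero_iff R 2 16).2 (by decide)
  rw [rpoly, derivative_add, derivative_add, derivative_C_mul_X_pow, derivative_C_mul_X_pow,
    derivative_C_mul_X, h4, h16]
  simp

lemma fpoly_eq_C_add_rpoly_mul_hpoly_sq (A B : R) :
    fpoly A B = C ((A + B ^ 2) ^ 4) + rpoly (A ^ 2 * B ^ 4) * hpoly (A ^ 2 * B ^ 4) ^ 2 := by
  simp only [fpoly, rpoly, hpoly, CharTwo.add_sq, map_mul, map_pow]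
  -- The monomials that occur twice in the expansion of `r h²`.
  linear_combination
    -(C A ^ 12 * C B ^ 24 * X ^ 24 + C A ^ 16 * C B ^ 32 * X ^ 36 + C A ^ 20 * C B ^ 40 * X ^ 48) *
      CharTwo.two_eq_zero (R := R[X])

lemma resultant_fpoly_derivative (A B : R) :
    resultant 60 59 (fpoly A B) (derivative (fpoly A B)) =
      A ^ 24 * B ^ 48 * (A ^ 1416 * B ^ 2832 * (A + B ^ 2) ^ 176) := by
  have hf := natDegree_fpoly_le A B
  have hdeg : (rpoly (A ^ 2 * B ^ 4)).natDegree + 2 * 22 ≤ 60 := by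
    have := natDegree_rpoly_le (A ^ 2 * B ^ 4)
    omega
  have hres := resultant_derivative_C_add_mul_pow_char 2 ((A + B ^ 2) ^ 4) 15
    (derivative_rpoly (A ^ 2 * B ^ 4)) (natDegree_hpoly_le (A ^ 2 * B ^ 4)) hdeg
  rw [← fpoly_eq_C_add_rpoly_mul_hpoly_sq, coeff_fpoly, coeff_hpoly] at hres
  rw [resultant_eq_polynomial_resultant hf ((natDegree_derivative_le _).trans (by omega)), hres]
  -- `ring` would otherwise expand `(A + B ^ 2) ^ 176`.
  generalize A + B ^ 2 = s
  ring

end CharTwo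

lemma separable_fpoly {k : Type*} [Field k] [CharP k 2] {A B : k} (hA : A ≠ 0) (hB : B ≠ 0)
    (hAB : A ≠ B ^ 2) : (fpoly A B).Separable := by
  have hs : A + B ^ 2 ≠ 0 := by rwa [← CharTwo.sub_eq_add, sub_ne_zero]
  rw [fpoly_eq_C_add_rpoly_mul_hpoly_sq]
  refine separable_C_add_mul_pow_char 2 (pow_ne_zero 4 hs).isUnit ?_ _
  rw [derivative_rpoly, isUnit_C]
  exact (mul_ne_zero (pow_ne_zero 2 hA) (pow_ne_zero 4 hB)).isUnit

theorem stmt_18_general {R : Type*} [CommRing R] [CharP R 2] (A B : R)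
    (k : Type*) [Field k] [IsSepClosed k] [CharP k 2] [DecidableEq k] :
    resultant 60 59 (fpoly A B) (derivative (fpoly A B)) =
        A ^ 24 * B ^ 48 * (A ^ 1416 * B ^ 2832 * (A + B ^ 2) ^ 176) ∧
      ∀ A₀ B₀ : k, A₀ ≠ 0 → B₀ ≠ 0 → A₀ ≠ B₀ ^ 2 →
        (fpoly A₀ B₀).roots.toFinset.card = 60 := by
  refine ⟨resultant_fpoly_derivative A B, fun A₀ B₀ hA hB hAB ↦ ?_⟩
  have hsep := separable_fpoly hA hB hAB
  rw [Multiset.toFinset_card_of_nodup (nodup_roots hsep),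
    ← (IsSepClosed.splits_of_separable _ hsep).natDegree_eq_card_roots, natDegree_fpoly hA hB]

/-- The discriminant of `f ∈ F₂[A,B][a]` with respect to `a` equals
`A¹⁴¹⁶ B²⁸³² (A + B²)¹⁷⁶` — expressed below (avoiding division, and noting that
in characteristic 2 the sign in `Res(f, f') = ± lc(f)·Disc(f)` is irrelevant) as
`Res_a(f, f') = lc(f) · A¹⁴¹⁶ B²⁸³² (A + B²)¹⁷⁶`.  In particular, for nonzero
`A, B` in an algebraically closed field `k` of characteristic 2 with `A ≠ B²`,
the specialization of `f` in `k[a]` has 60 distinct roots. -/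
theorem stmt_18 (k : Type*) [Field k] [IsAlgClosed k] [CharP k 2] [DecidableEq k] :
    resultant 60 59 (fpoly iA iB) (derivative (fpoly iA iB))
        = (fpoly iA iB).leadingCoeff
            * (iA ^ 1416 * iB ^ 2832 * (iA + iB ^ 2) ^ 176) ∧
    ∀ A B : k, A ≠ 0 → B ≠ 0 → A ≠ B ^ 2 →
      ((fpoly A B).roots.toFinset.card = 60) := by
  rw [leadingCoeff_fpoly (A := iA) (B := iB) (MvPolynomial.X_ne_zero 0) (MvPolynomial.X_ne_zero 1)]
  exact stmt_18_general iA iB k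

end Stmt18
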